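/- arXiv:2605.13808 — 2 statements merged into one kernel-verified Lean document; each statement's English description precedes it below -/
import Mathlib

section
/- Let 𝒜 be an abelian category and let 𝒞 be a class of objects of 𝒜 containing the zero objects and closed under subobjects, quotient objects, and extensions. Let 0 → F → E → G → 0 be a short exact sequence in 𝒜 such that E is 𝒞-saturated and G is 𝒞-torsion-free. Then F is 𝒞-saturated. -/
open CategoryTheory CategoryTheory.Limits

/-- A class of objects of an abelian category containing the zero objects and closed under
subobjects, quotient objects, and extensions (a Serre class). -/
def IsSerreClass {𝒜 : Type*} [Category 𝒜] [Abelian 𝒜] (P : 𝒜 → Prop) : Prop :=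
  (∀ X : 𝒜, IsZero X → P X) ∧
    (∀ ⦃X Y : 𝒜⦄ (f : X ⟶ Y), Mono f → P Y → P X) ∧
    (∀ ⦃X Y : 𝒜⦄ (f : X ⟶ Y), Epi f → P X → P Y) ∧
    (∀ S : ShortComplex 𝒜, S.ShortExact → P S.X₁ → P S.X₃ → P S.X₂)

/-- An object `X` is `𝒞`-torsion-free if every morphism `c ⟶ X` with `c ∈ 𝒞` is zero. -/
def IsTorsionFreeFor {𝒜 : Type*} [Category 𝒜] [Abelian 𝒜] (P : 𝒜 → Prop) (X : 𝒜) : Prop :=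
  ∀ ⦃c : 𝒜⦄, P c → ∀ f : c ⟶ X, f = 0

/-- An object `T` is `𝒞`-saturated if it is `𝒞`-torsion-free and every short exact sequence
`0 → T → Y → c → 0` with `c ∈ 𝒞` splits (equivalently, every monomorphism `T ⟶ Y` with
cokernel in `𝒞` admits a retraction). -/
def IsSaturatedFor {𝒜 : Type*} [Category 𝒜] [Abelian 𝒜] (P : 𝒜 → Prop) (T : 𝒜) : Prop :=
  IsTorsionFreeFor P T ∧
    ∀ ⦃Y : 𝒜⦄ (f : T ⟶ Y), Mono f → P (cokernel f) → ∃ r : Y ⟶ T, f ≫ r = 𝟙 T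

/-- A `𝒞`-hull of `E` is a monomorphism `ι : E ⟶ T` such that `coker ι ∈ 𝒞` and `T` is
`𝒞`-saturated. -/
def IsHullFor {𝒜 : Type*} [Category 𝒜] [Abelian 𝒜] (P : 𝒜 → Prop)
    {E T : 𝒜} (ι : E ⟶ T) : Prop :=
  Mono ι ∧ P (cokernel ι) ∧ IsSaturatedFor P T

/-!
A `𝒞`-saturated object `E` is injective relative to monomorphisms with cokernel in `𝒞`: pushing
such a monomorphism out along a morphism to `E` does not change its cokernel, so the pushout
splits. Hence, given `0 → F → Y → c → 0` with `c ∈ 𝒞`, the inclusion `F ⟶ E` extends to `Y ⟶ E`.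
The composite `Y ⟶ E ⟶ G` kills `F`, so it factors through `c` and vanishes because `G` is
`𝒞`-torsion-free. The extension therefore lands in `F`, where it is a retraction of `F ⟶ Y`.
-/

section

variable {𝒜 : Type*} [Category 𝒜] [Abelian 𝒜] {P : ObjectProperty 𝒜}

lemma IsSerreClass.isClosedUnderIsomorphisms (hP : IsSerreClass P) :
    P.IsClosedUnderIsomorphisms where
  of_iso e hX := hP.2.2.1 e.hom inferInstance hX

lemma IsTorsionFreeFor.of_mono {X Y : 𝒜} (hY : IsTorsionFreeFor P Y) (i : X ⟶ Y) [Mono i] :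
    IsTorsionFreeFor P X :=
  fun _ hc u ↦ zero_of_comp_mono i (hY hc (u ≫ i))

lemma IsTorsionFreeFor.eq_zero_of_comp_eq_zero {A Y G : 𝒜} (hG : IsTorsionFreeFor P G)
    {f : A ⟶ Y} (hf : P (cokernel f)) {g : Y ⟶ G} (hfg : f ≫ g = 0) : g = 0 := by
  rw [← cokernel.π_desc f g hfg, hG hf (cokernel.desc f g hfg), comp_zero]

lemma IsSaturatedFor.exists_extension [P.IsClosedUnderIsomorphisms] {A Y T : 𝒜}
    (hT : IsSaturatedFor P T) (f : A ⟶ Y) [Mono f] (hf : P (cokernel f)) (u : A ⟶ T) :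
    ∃ v : Y ⟶ T, f ≫ v = u := by
  have sq : IsPushout f u (pushout.inr u f) (pushout.inl u f) :=
    (IsPushout.of_hasPushout u f).flip
  have := isIso_cokernel_map_of_isPushout sq
  have hcoker : P (cokernel (pushout.inl u f)) := P.prop_of_isIso (cokernel.map _ _ _ _ sq.w) hf
  obtain ⟨r, hr⟩ := hT.2 (pushout.inl u f) inferInstance hcoker
  exact ⟨pushout.inr u f ≫ r, by rw [sq.w_assoc, hr, Category.comp_id]⟩

theorem saturated_of_shortExact_general [P.IsClosedUnderIsomorphisms] (S : ShortComplex 𝒜)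
    [Mono S.f] (hS : S.Exact) (hE : IsSaturatedFor P S.X₂) (hG : IsTorsionFreeFor P S.X₃) :
    IsSaturatedFor P S.X₁ := by
  refine ⟨hE.1.of_mono S.f, fun Y f _ hf ↦ ?_⟩
  obtain ⟨v, hv⟩ := hE.exists_extension f hf S.f
  have hvg : v ≫ S.g = 0 := hG.eq_zero_of_comp_eq_zero hf (by rw [← Category.assoc, hv, S.zero])
  refine ⟨hS.lift v hvg, ?_⟩
  rw [← cancel_mono S.f, Category.assoc, hS.lift_f, hv, Category.id_comp]

end

/-- If `0 → F → E → G → 0` is a short exact sequence with `E` `𝒞`-saturated and `G`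
`𝒞`-torsion-free, then `F` is `𝒞`-saturated. -/
theorem saturated_of_shortExact {𝒜 : Type*} [Category 𝒜] [Abelian 𝒜]
    {P : 𝒜 → Prop} (hP : IsSerreClass P) (S : ShortComplex 𝒜) (hS : S.ShortExact)
    (hE : IsSaturatedFor P S.X₂) (hG : IsTorsionFreeFor P S.X₃) :
    IsSaturatedFor P S.X₁ :=
  have := hP.isClosedUnderIsomorphisms
  have := hS.mono_f
  saturated_of_shortExact_general S hS.exact hE hG
end

section
/- Let 𝒜 be an abelian category and let 𝒞 be a class of objects of 𝒜 containing the zero objects and closed under subobjects, quotient objects, and extensions. Let u : F → E be a monomorphism with coker(u) ∈ 𝒞, assume E is 𝒞-torsion-free, and let ι : F → T be a 𝒞-hull of F. Then there exists a unique morphism w : E → T with w ∘ u = ι, and this w is a monomorphism. -/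
open CategoryTheory CategoryTheory.Limits

/-!
Two extensions to `E` of a morphism `F ⟶ T` differ by a morphism factoring through `coker u`, which
vanishes when `T` is torsion-free. Extensions exist when `T` is saturated: the pushout of `u` along
`F ⟶ T` is a monomorphism out of `T` with cokernel isomorphic to `coker u`, hence has a retraction.
Finally, if `u ≫ w` is a monomorphism, the connecting morphism of the kernel-cokernel sequence
embeds `ker w` into `coker u`, so `ker w ⟶ E` vanishes when `E` is torsion-free.
-/

section Extension

variable {𝒜 : Type*} [Category 𝒜] [Abelian 𝒜] {P : ObjectProperty 𝒜} {F E T : 𝒜}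

theorem IsSerreClass.isClosedUnderSubobjects (hP : IsSerreClass P) :
    P.IsClosedUnderSubobjects where
  prop_of_mono f hf := hP.2.1 f hf

theorem IsTorsionFreeFor.eq_of_precomp_eq (hT : IsTorsionFreeFor P T) {u : F ⟶ E}
    (hq : P (cokernel u)) {v w : E ⟶ T} (h : u ≫ v = u ≫ w) : v = w := by
  have hvw : u ≫ (v - w) = 0 := by rw [Preadditive.comp_sub, h, sub_self]
  rw [← sub_eq_zero, ← cokernel.π_desc u (v - w) hvw, hT hq (cokernel.desc u (v - w) hvw),
    comp_zero]

theorem IsSaturatedFor.exists_precomp_eq [P.IsClosedUnderIsomorphisms] (hT : IsSaturatedFor P T)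
    (u : F ⟶ E) [Mono u] (hq : P (cokernel u)) (f : F ⟶ T) : ∃ w : E ⟶ T, u ≫ w = f := by
  have sq : IsPushout u f (pushout.inl u f) (pushout.inr u f) := .of_hasPushout u f
  have := isIso_cokernel_map_of_isPushout sq
  have hq' : P (cokernel (pushout.inr u f)) :=
    P.prop_of_iso (asIso (cokernel.map _ _ _ _ sq.w)) hq
  obtain ⟨r, hr⟩ := hT.2 (pushout.inr u f) inferInstance hq'
  exact ⟨pushout.inl u f ≫ r, by rw [pushout.condition_assoc, hr, Category.comp_id]⟩

theorem IsSaturatedFor.existsUnique_precomp_eq [P.IsClosedUnderIsomorphisms]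
    (hT : IsSaturatedFor P T) (u : F ⟶ E) [Mono u] (hq : P (cokernel u)) (f : F ⟶ T) :
    ∃! w : E ⟶ T, u ≫ w = f :=
  existsUnique_of_exists_of_unique (hT.exists_precomp_eq u hq f)
    fun _ _ hv hw ↦ hT.1.eq_of_precomp_eq hq (hv.trans hw.symm)

theorem mono_kernelCokernelCompSequence_δ (u : F ⟶ E) (w : E ⟶ T) [Mono (u ≫ w)] :
    Mono (kernelCokernelCompSequence.δ u w) :=
  ((kernelCokernelCompSequence_exact u w).exact 1).mono_g
    ((isZero_kernel_of_mono (u ≫ w)).eq_of_src _ _)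

theorem IsTorsionFreeFor.mono_of_mono_comp [P.IsClosedUnderSubobjects]
    (hE : IsTorsionFreeFor P E) {u : F ⟶ E} (hq : P (cokernel u)) (w : E ⟶ T) [Mono (u ≫ w)] :
    Mono w := by
  have := mono_kernelCokernelCompSequence_δ u w
  have hker : P (kernel w) := P.prop_of_mono (kernelCokernelCompSequence.δ u w) hq
  exact Preadditive.mono_of_kernel_zero (hE hker (kernel.ι w))

theorem hull_factor_of_mono_general [P.IsClosedUnderSubobjects] (u : F ⟶ E) (hu : Mono u)
    (hq : P (cokernel u)) (hE : IsTorsionFreeFor P E) {ι : F ⟶ T} (hι : Mono ι)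
    (hT : IsSaturatedFor P T) :
    (∃! w : E ⟶ T, u ≫ w = ι) ∧ ∀ w : E ⟶ T, u ≫ w = ι → Mono w := by
  refine ⟨hT.existsUnique_precomp_eq u hq ι, ?_⟩
  rintro w rfl
  exact hE.mono_of_mono_comp hq w

end Extension

/-- **Extension of hull maps.** If `u : F ⟶ E` is a monomorphism with `coker u ∈ 𝒞`, `E` is
`𝒞`-torsion-free, and `ι : F ⟶ T` is a `𝒞`-hull of `F`, then `ι` factors uniquely through
`u`, and the resulting morphism `E ⟶ T` is a monomorphism. -/
theorem hull_factor_of_mono {𝒜 : Type*} [Category 𝒜] [Abelian 𝒜]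
    {P : 𝒜 → Prop} (hP : IsSerreClass P) {F E T : 𝒜}
    (u : F ⟶ E) (hu : Mono u) (hq : P (cokernel u))
    (hE : IsTorsionFreeFor P E) {ι : F ⟶ T} (hι : IsHullFor P ι) :
    (∃! w : E ⟶ T, u ≫ w = ι) ∧ ∀ w : E ⟶ T, u ≫ w = ι → Mono w := by
  have := hP.isClosedUnderSubobjects
  exact hull_factor_of_mono_general u hu hq hE hι.1 hι.2.2
end
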